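/- The ℓ1-uniform contextuality distance is subadditive under products: for behaviors B₁ on Υ₁ = (M₁, C₁, O) and B₂ on Υ₂ = (M₂, C₂, O) with M₁ and M₂ disjoint, D_u(B₁ ⊗ B₂) ≤ D_u(B₁) + D_u(B₂). -/

import Mathlib

/-!
If `d₁`, `d₂` are global distributions, then `d (f) = d₁ (f ∘ inl) * d₂ (f ∘ inr)` is a global
distribution on the disjoint union whose marginal on `γ₁ ∪ γ₂` is the product of the two marginals
(`marg_prodDist`). Splitting `p₁ p₂ - q₁ q₂ = (p₁ - q₁) p₂ + q₁ (p₂ - q₂)` bounds the ℓ1 distance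
on each context `γ₁ ∪ γ₂` by the sum of the distances on `γ₁` and `γ₂` (`sum_abs_mul_sub_le`).
Summing over the `|C₁| |C₂|` contexts and dividing by their number gives the claim, after passing
to the infimum over both approximants. If the product scenario has no non-contextual behavior
(`O` empty with measurements present), its infimum is `0` by convention and there is
nothing to prove; otherwise both factors have a global section as well.
-/

open Finset

/-- A family assigning to each context `γ` a real-valued function on joint
outcome assignments `↥γ → O`. Behaviors are such families. -/
abbrev Fam (M O : Type) : Type := (γ : Finset M) → (↥γ → O) → ℝ

variable {M O : Type} [Fintype M] [DecidableEq M] [Fintype O] [DecidableEq O]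

/-- `p` is a behavior for the scenario with contexts `C`: on every context it is a
probability distribution on joint outcomes. -/
def IsBehavior (C : Finset (Finset M)) (p : Fam M O) : Prop :=
  ∀ γ ∈ C, (∀ s, 0 ≤ p γ s) ∧ ∑ s, p γ s = 1

/-- Marginal of a global distribution `d` on `O^M` on the context `γ`. -/
def marg (γ : Finset M) (d : (M → O) → ℝ) (s : ↥γ → O) : ℝ :=
  ∑ f : M → O, if (fun x : ↥γ => f x.1) = s then d f else 0

/-- A behavior is non-contextual when it admits a global section: a probability
distribution on `O^M` marginalizing to `p γ` on every context `γ ∈ C`. -/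
def NonContextual (C : Finset (Finset M)) (p : Fam M O) : Prop :=
  ∃ d : (M → O) → ℝ, (∀ f, 0 ≤ d f) ∧ (∑ f, d f = 1) ∧
    ∀ γ ∈ C, ∀ s, p γ s = marg γ d s

/-- The ℓ1-uniform contextuality distance. -/
noncomputable def Du (C : Finset (Finset M)) (p : Fam M O) : ℝ :=
  (C.card : ℝ)⁻¹ * sInf {d : ℝ | ∃ q : Fam M O, IsBehavior C q ∧ NonContextual C q ∧
    d = ∑ γ ∈ C, ∑ s, |p γ s - q γ s|}

variable {M₁ M₂ : Type} [Fintype M₁] [DecidableEq M₁] [Fintype M₂] [DecidableEq M₂]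

/-- Embedding of the first set of measurements into the disjoint union. -/
def inlEmb (M₁ M₂ : Type) : M₁ ↪ M₁ ⊕ M₂ := ⟨Sum.inl, Sum.inl_injective⟩

/-- Embedding of the second set of measurements into the disjoint union. -/
def inrEmb (M₁ M₂ : Type) : M₂ ↪ M₁ ⊕ M₂ := ⟨Sum.inr, Sum.inr_injective⟩

/-- The context `γ₁ ∪ γ₂` inside the disjoint union of measurements. -/
def joinCtx (γ₁ : Finset M₁) (γ₂ : Finset M₂) : Finset (M₁ ⊕ M₂) :=
  γ₁.map (inlEmb M₁ M₂) ∪ γ₂.map (inrEmb M₁ M₂)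

/-- Contexts of the product scenario: `{γ₁ ∪ γ₂ : γ₁ ∈ C₁, γ₂ ∈ C₂}`. -/
def prodC (C₁ : Finset (Finset M₁)) (C₂ : Finset (Finset M₂)) : Finset (Finset (M₁ ⊕ M₂)) :=
  (C₁ ×ˢ C₂).image fun gg => joinCtx gg.1 gg.2

/-- Contexts of the controlled-choice scenario: `C₁ ∪ C₂`. -/
def ccC (C₁ : Finset (Finset M₁)) (C₂ : Finset (Finset M₂)) : Finset (Finset (M₁ ⊕ M₂)) :=
  C₁.image (fun γ => γ.map (inlEmb M₁ M₂)) ∪ C₂.image (fun γ => γ.map (inrEmb M₁ M₂))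

/-- Restriction of a joint outcome assignment on `γ₁ ∪ γ₂` to `γ₁`. -/
def restr1 (γ₁ : Finset M₁) (γ₂ : Finset M₂) (s : ↥(joinCtx γ₁ γ₂) → O) : ↥γ₁ → O :=
  fun x => s ⟨Sum.inl x.1, Finset.mem_union_left _ (Finset.mem_map_of_mem _ x.2)⟩

/-- Restriction of a joint outcome assignment on `γ₁ ∪ γ₂` to `γ₂`. -/
def restr2 (γ₁ : Finset M₁) (γ₂ : Finset M₂) (s : ↥(joinCtx γ₁ γ₂) → O) : ↥γ₂ → O :=
  fun x => s ⟨Sum.inr x.1, Finset.mem_union_right _ (Finset.mem_map_of_mem _ x.2)⟩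

/-- Identification of outcome assignments on the copy of `γ ∈ C₁` inside `M₁ ⊕ M₂`
with outcome assignments on `γ`. -/
def restrL (γ : Finset M₁) (s : ↥(γ.map (inlEmb M₁ M₂)) → O) : ↥γ → O :=
  fun x => s ⟨Sum.inl x.1, Finset.mem_map_of_mem _ x.2⟩

/-- Identification of outcome assignments on the copy of `γ ∈ C₂` inside `M₁ ⊕ M₂`
with outcome assignments on `γ`. -/
def restrR (γ : Finset M₂) (s : ↥(γ.map (inrEmb M₁ M₂)) → O) : ↥γ → O :=
  fun x => s ⟨Sum.inr x.1, Finset.mem_map_of_mem _ x.2⟩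

/-- The set of ℓ1 distances from `p` to non-contextual behaviors, whose infimum defines `Du`. -/
def distSet (C : Finset (Finset M)) (p : Fam M O) : Set ℝ :=
  {d : ℝ | ∃ q : Fam M O, IsBehavior C q ∧ NonContextual C q ∧
    d = ∑ γ ∈ C, ∑ s, |p γ s - q γ s|}

lemma distSet_nonneg {C : Finset (Finset M)} {p : Fam M O} {a : ℝ} (ha : a ∈ distSet C p) :
    0 ≤ a := by
  obtain ⟨q, -, -, rfl⟩ := ha
  positivity

lemma Du_eq (C : Finset (Finset M)) (p : Fam M O) :
    Du C p = (C.card : ℝ)⁻¹ * sInf (distSet C p) := rfl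

lemma Du_nonneg (C : Finset (Finset M)) (p : Fam M O) : 0 ≤ Du C p := by
  rw [Du_eq]
  exact mul_nonneg (by positivity) (Real.sInf_nonneg fun _ h => distSet_nonneg h)

lemma marg_isBehavior (C : Finset (Finset M)) {d : (M → O) → ℝ} (hd : ∀ f, 0 ≤ d f)
    (hs : ∑ f, d f = 1) : IsBehavior C fun γ => marg γ d := by
  refine fun γ _ => ⟨fun s => ?_, ?_⟩
  · refine Finset.sum_nonneg fun f _ => ?_
    split_ifs
    exacts [hd f, le_rfl]
  · simp only [marg]
    rw [Finset.sum_comm]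
    simpa using hs

lemma mem_distSet_of_marg (C : Finset (Finset M)) (p : Fam M O) {d : (M → O) → ℝ}
    (hd : ∀ f, 0 ≤ d f) (hs : ∑ f, d f = 1) :
    ∑ γ ∈ C, ∑ s, |p γ s - marg γ d s| ∈ distSet C p :=
  ⟨fun γ => marg γ d, marg_isBehavior C hd hs, ⟨d, hd, hs, fun _ _ _ => rfl⟩, rfl⟩

lemma distSet_nonempty (C : Finset (Finset M)) (p : Fam M O) (f : M → O) :
    (distSet C p).Nonempty := by
  refine ⟨_, mem_distSet_of_marg C p (d := fun g => if g = f then 1 else 0) (fun g => ?_) ?_⟩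
  · split_ifs <;> norm_num
  · simp

lemma joinCtx_injective {γ₁ γ₁' : Finset M₁} {γ₂ γ₂' : Finset M₂}
    (h : joinCtx γ₁ γ₂ = joinCtx γ₁' γ₂') : γ₁ = γ₁' ∧ γ₂ = γ₂' := by
  constructor
  · ext x
    have := congrArg (fun c => Sum.inl x ∈ c) h
    simpa [joinCtx, inlEmb, inrEmb] using this
  · ext x
    have := congrArg (fun c => Sum.inr x ∈ c) h
    simpa [joinCtx, inlEmb, inrEmb] using this

lemma restr_bijective (γ₁ : Finset M₁) (γ₂ : Finset M₂) :
    Function.Bijective fun s : ↥(joinCtx γ₁ γ₂) → O => (restr1 γ₁ γ₂ s, restr2 γ₁ γ₂ s) := by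
  constructor
  · intro s t h
    obtain ⟨h1, h2⟩ := Prod.mk.inj h
    funext ⟨x, hx⟩
    rcases x with x | x
    · have hx' : x ∈ γ₁ := by simpa [joinCtx, inlEmb, inrEmb] using hx
      exact congrFun h1 ⟨x, hx'⟩
    · have hx' : x ∈ γ₂ := by simpa [joinCtx, inlEmb, inrEmb] using hx
      exact congrFun h2 ⟨x, hx'⟩
  · rintro ⟨s, t⟩
    refine ⟨fun x => match x with
      | ⟨Sum.inl x, hx⟩ => s ⟨x, by simpa [joinCtx, inlEmb, inrEmb] using hx⟩
      | ⟨Sum.inr x, hx⟩ => t ⟨x, by simpa [joinCtx, inlEmb, inrEmb] using hx⟩, rfl⟩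

/-- The product of two global distributions, as a weight on assignments over `M₁ ⊕ M₂`. -/
def prodDist (d₁ : (M₁ → O) → ℝ) (d₂ : (M₂ → O) → ℝ) (f : M₁ ⊕ M₂ → O) : ℝ :=
  d₁ (f ∘ Sum.inl) * d₂ (f ∘ Sum.inr)

lemma sum_prod_comp (F : (M₁ → O) → ℝ) (G : (M₂ → O) → ℝ) :
    ∑ f : M₁ ⊕ M₂ → O, F (f ∘ Sum.inl) * G (f ∘ Sum.inr) = (∑ f, F f) * ∑ g, G g := by
  rw [Finset.sum_mul_sum, ← Fintype.sum_prod_type']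
  exact Fintype.sum_equiv (Equiv.sumArrowEquivProdArrow M₁ M₂ O) _ _ fun _ => rfl

lemma marg_prodDist (d₁ : (M₁ → O) → ℝ) (d₂ : (M₂ → O) → ℝ) (γ₁ : Finset M₁) (γ₂ : Finset M₂)
    (s : ↥(joinCtx γ₁ γ₂) → O) :
    marg (joinCtx γ₁ γ₂) (prodDist d₁ d₂) s =
      marg γ₁ d₁ (restr1 γ₁ γ₂ s) * marg γ₂ d₂ (restr2 γ₁ γ₂ s) := by
  unfold marg
  rw [← sum_prod_comp]
  refine Finset.sum_congr rfl fun f _ => ?_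
  -- `f` restricts to `s` on the join iff both of its halves restrict to the halves of `s`.
  have key : ((fun x : ↥(joinCtx γ₁ γ₂) => f x.1) = s) ↔
      ((fun x : ↥γ₁ => (f ∘ Sum.inl) x.1) = restr1 γ₁ γ₂ s) ∧
      ((fun x : ↥γ₂ => (f ∘ Sum.inr) x.1) = restr2 γ₁ γ₂ s) := by
    rw [← (restr_bijective γ₁ γ₂).1.eq_iff]
    exact Prod.mk_inj
  rw [ite_zero_mul_ite_zero]
  exact if_congr key rfl rfl

/-- The ℓ1 distance of product weights is at most the sum of the ℓ1 distances, provided `p₂` and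
`q₁` are probability weights. -/
lemma sum_abs_mul_sub_le {α β : Type} [Fintype α] [Fintype β] (p₁ q₁ : α → ℝ) (p₂ q₂ : β → ℝ)
    (hp : ∀ b, 0 ≤ p₂ b) (hp1 : ∑ b, p₂ b = 1) (hq : ∀ a, 0 ≤ q₁ a) (hq1 : ∑ a, q₁ a = 1) :
    ∑ x : α × β, |p₁ x.1 * p₂ x.2 - q₁ x.1 * q₂ x.2| ≤
      ∑ a, |p₁ a - q₁ a| + ∑ b, |p₂ b - q₂ b| := by
  calc ∑ x : α × β, |p₁ x.1 * p₂ x.2 - q₁ x.1 * q₂ x.2|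
      ≤ ∑ x : α × β, (|p₁ x.1 - q₁ x.1| * p₂ x.2 + q₁ x.1 * |p₂ x.2 - q₂ x.2|) := by
        refine Finset.sum_le_sum fun x _ => ?_
        rw [show p₁ x.1 * p₂ x.2 - q₁ x.1 * q₂ x.2 =
          (p₁ x.1 - q₁ x.1) * p₂ x.2 + q₁ x.1 * (p₂ x.2 - q₂ x.2) by ring]
        refine (abs_add_le _ _).trans_eq ?_
        rw [abs_mul, abs_mul, abs_of_nonneg (hp _), abs_of_nonneg (hq _)]
    _ = _ := by
        rw [Finset.sum_add_distrib, Fintype.sum_prod_type, Fintype.sum_prod_type]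
        simp only [← Finset.sum_mul_sum, hp1, hq1, mul_one, one_mul]

/-- Subadditivity of the ℓ1-uniform contextuality distance under products. -/
theorem du_product_subadditive
    (C₁ : Finset (Finset M₁)) (C₂ : Finset (Finset M₂))
    (p₁ : Fam M₁ O) (p₂ : Fam M₂ O) (p12 : Fam (M₁ ⊕ M₂) O)
    (h₁ : IsBehavior C₁ p₁) (h₂ : IsBehavior C₂ p₂)
    (h12 : ∀ γ₁ ∈ C₁, ∀ γ₂ ∈ C₂, ∀ s : ↥(joinCtx γ₁ γ₂) → O,
      p12 (joinCtx γ₁ γ₂) s = p₁ γ₁ (restr1 γ₁ γ₂ s) * p₂ γ₂ (restr2 γ₁ γ₂ s)) :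
    Du (prodC C₁ C₂) p12 ≤ Du C₁ p₁ + Du C₂ p₂ := by
  rcases C₁.eq_empty_or_nonempty with rfl | hC₁
  · have : Du (prodC ∅ C₂) p12 = 0 := by simp [Du, prodC]
    rw [this]
    exact add_nonneg (Du_nonneg _ _) (Du_nonneg _ _)
  rcases C₂.eq_empty_or_nonempty with rfl | hC₂
  · have : Du (prodC C₁ ∅) p12 = 0 := by simp [Du, prodC]
    rw [this]
    exact add_nonneg (Du_nonneg _ _) (Du_nonneg _ _)
  rcases (distSet (prodC C₁ C₂) p12).eq_empty_or_nonempty with hE | ⟨_, _, -, ⟨d, -, hd, -⟩, -⟩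
  · rw [Du_eq, hE, Real.sInf_empty, mul_zero]
    exact add_nonneg (Du_nonneg _ _) (Du_nonneg _ _)
  -- A distribution of total mass `1` lives on a nonempty space of assignments.
  have ⟨f⟩ : Nonempty (M₁ ⊕ M₂ → O) := by
    by_contra h
    rw [not_nonempty_iff] at h
    simp at hd
  have hinj : Set.InjOn (fun gg : Finset M₁ × Finset M₂ => joinCtx gg.1 gg.2)
      (C₁ ×ˢ C₂ : Finset (Finset M₁ × Finset M₂)) := by
    intro a _ b _ h
    obtain ⟨h1, h2⟩ := joinCtx_injective h
    exact Prod.ext h1 h2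
  have hcard : ((prodC C₁ C₂).card : ℝ) = C₁.card * C₂.card := by
    rw [prodC, Finset.card_image_of_injOn hinj, Finset.card_product, Nat.cast_mul]
  have hc₁ : (0 : ℝ) < C₁.card := by exact_mod_cast hC₁.card_pos
  have hc₂ : (0 : ℝ) < C₂.card := by exact_mod_cast hC₂.card_pos
  have main : ∀ a ∈ distSet C₁ p₁, ∀ b ∈ distSet C₂ p₂,
      sInf (distSet (prodC C₁ C₂) p12) ≤ C₂.card * a + C₁.card * b := by
    rintro _ ⟨q₁, hq₁, ⟨d₁, hd₁, hs₁, hm₁⟩, rfl⟩ _ ⟨q₂, hq₂, ⟨d₂, hd₂, hs₂, hm₂⟩, rfl⟩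
    refine (csInf_le ⟨0, fun _ h => distSet_nonneg h⟩
      (mem_distSet_of_marg _ p12 (d := prodDist d₁ d₂)
        (fun f => mul_nonneg (hd₁ _) (hd₂ _)) ?_)).trans ?_
    · unfold prodDist
      rw [sum_prod_comp, hs₁, hs₂, one_mul]
    rw [prodC, Finset.sum_image hinj, Finset.sum_product]
    calc _ ≤ ∑ γ₁ ∈ C₁, ∑ γ₂ ∈ C₂,
          (∑ s, |p₁ γ₁ s - q₁ γ₁ s| + ∑ s, |p₂ γ₂ s - q₂ γ₂ s|) := by
          refine Finset.sum_le_sum fun γ₁ hγ₁ => Finset.sum_le_sum fun γ₂ hγ₂ => ?_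
          refine le_trans (le_of_eq ?_) (sum_abs_mul_sub_le (p₁ γ₁) (q₁ γ₁) (p₂ γ₂) (q₂ γ₂)
            (h₂ γ₂ hγ₂).1 (h₂ γ₂ hγ₂).2 (hq₁ γ₁ hγ₁).1 (hq₁ γ₁ hγ₁).2)
          refine Fintype.sum_bijective _ (restr_bijective γ₁ γ₂) _ _ fun s => ?_
          rw [h12 γ₁ hγ₁ γ₂ hγ₂, marg_prodDist, hm₁ γ₁ hγ₁, hm₂ γ₂ hγ₂]
      _ = _ := by
          simp only [Finset.sum_add_distrib, Finset.sum_const, nsmul_eq_mul, Finset.mul_sum]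
  have hInf : sInf (distSet (prodC C₁ C₂) p12) ≤
      C₂.card * sInf (distSet C₁ p₁) + C₁.card * sInf (distSet C₂ p₂) := by
    have step : ∀ a ∈ distSet C₁ p₁, sInf (distSet (prodC C₁ C₂) p12) ≤
        C₂.card * a + C₁.card * sInf (distSet C₂ p₂) := by
      intro a ha
      have : (sInf (distSet (prodC C₁ C₂) p12) - C₂.card * a) / C₁.card ≤
          sInf (distSet C₂ p₂) := by
        refine le_csInf (distSet_nonempty C₂ p₂ (f ∘ Sum.inr)) fun b hb => ?_
        rw [div_le_iff₀ hc₁]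
        linarith [main a ha b hb]
      rw [div_le_iff₀ hc₁] at this
      linarith
    have : (sInf (distSet (prodC C₁ C₂) p12) - C₁.card * sInf (distSet C₂ p₂)) / C₂.card ≤
        sInf (distSet C₁ p₁) := by
      refine le_csInf (distSet_nonempty C₁ p₁ (f ∘ Sum.inl)) fun a ha => ?_
      rw [div_le_iff₀ hc₂]
      linarith [step a ha]
    rw [div_le_iff₀ hc₂] at this
    linarith
  rw [Du_eq, Du_eq, Du_eq, hcard]
  calc _ ≤ ((C₁.card : ℝ) * C₂.card)⁻¹ *
        (C₂.card * sInf (distSet C₁ p₁) + C₁.card * sInf (distSet C₂ p₂)) :=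
        mul_le_mul_of_nonneg_left hInf (by positivity)
    _ = _ := by field_simp
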